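/- In ℂ² let ω₁ = ½(I + σ_x), ω₂ = ½(I + σ_y), ω₃ = ½(I + σ_z) be the density matrices of the spin states pointing in the +x, +y and +z directions. Then the supremum over all POVMs (M₁, M₂, M₃) on ℂ² of (1/3)·∑_{b=1}^{3} tr(M_b ω_b) equals 1/3 + 2/(3√6), and this value is attained by the POVM M_b = (1/3)(I − n_b·σ) with n₁ = (−2,1,1)/√6, n₂ = (1,−2,1)/√6, n₃ = (1,1,−2)/√6, where n·σ = n_x σ_x + n_y σ_y + n_z σ_z. -/

import Mathlib

open Matrix ComplexOrder

def pauliX : Matrix (Fin 2) (Fin 2) ℂ := !![0, 1; 1, 0]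
def pauliY : Matrix (Fin 2) (Fin 2) ℂ := !![0, -Complex.I; Complex.I, 0]
def pauliZ : Matrix (Fin 2) (Fin 2) ℂ := !![1, 0; 0, -1]

/-- `n·σ = n_x σ_x + n_y σ_y + n_z σ_z` for a real vector `n`. -/
noncomputable def pauliVec (a b c : ℝ) : Matrix (Fin 2) (Fin 2) ℂ :=
  (a : ℂ) • pauliX + (b : ℂ) • pauliY + (c : ℂ) • pauliZ

/-- The spin states `ω₁ = (I+σ_x)/2`, `ω₂ = (I+σ_y)/2`, `ω₃ = (I+σ_z)/2`. -/
noncomputable def omega6 : Fin 3 → Matrix (Fin 2) (Fin 2) ℂ :=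
  ![(1/2 : ℂ) • (1 + pauliX), (1/2 : ℂ) • (1 + pauliY), (1/2 : ℂ) • (1 + pauliZ)]

/-- The min-entropy-optimal POVM `M_b = (I - n_b·σ)/3` with
`n₁ = (-2,1,1)/√6`, `n₂ = (1,-2,1)/√6`, `n₃ = (1,1,-2)/√6`. -/
noncomputable def Mpovm6 : Fin 3 → Matrix (Fin 2) (Fin 2) ℂ :=
  ![(1/3 : ℂ) • (1 - pauliVec (-2/Real.sqrt 6) (1/Real.sqrt 6) (1/Real.sqrt 6)),
    (1/3 : ℂ) • (1 - pauliVec (1/Real.sqrt 6) (-2/Real.sqrt 6) (1/Real.sqrt 6)),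
    (1/3 : ℂ) • (1 - pauliVec (1/Real.sqrt 6) (1/Real.sqrt 6) (-2/Real.sqrt 6))]

/-!
The optimality certificate is semidefinite duality: if `K - ρ b` is positive semidefinite for every
`b`, then any POVM `M` satisfies `∑ tr (M b ρ b) ≤ ∑ tr (M b K) = tr K`, with equality as soon as
`M b (K - ρ b) = 0`. For qubit states whose Bloch vectors lie in the ball with centre `c` and radius
`r`, the operator `K = ((1 + r) I + c·σ) / 2` is such a certificate, of trace `1 + r`. The unit
vectors `+x`, `+y`, `+z` lie on the sphere about their centroid of radius `√6 / 3`, and the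
measurement along the three directions from the centroid kills `K - ρ b`.
-/

section Discrimination

variable {ι n 𝕜 : Type*} [Fintype ι] [Fintype n] [RCLike 𝕜]

open MatrixOrder in
theorem trace_mul_nonneg_of_posSemidef {A B : Matrix n n 𝕜} (hA : A.PosSemidef)
    (hB : B.PosSemidef) : 0 ≤ (A * B).trace := by
  classical
  obtain ⟨C, rfl⟩ := CStarAlgebra.nonneg_iff_eq_star_mul_self.mp hA.nonneg
  rw [star_eq_conjTranspose, Matrix.mul_assoc, trace_mul_comm]
  exact (hB.mul_mul_conjTranspose_same C).trace_nonneg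

/-- A positive operator-valued measure with outcomes in `ι`: the measurements among which the
optimal guessing strategy is sought. -/
def IsPOVM [DecidableEq n] (M : ι → Matrix n n 𝕜) : Prop :=
  (∀ b, (M b).PosSemidef) ∧ ∑ b, M b = 1

/-- The sum over `b` of the probabilities of guessing `b` correctly when `ρ b` is measured with `M`.
The prior is left out: for a uniform prior, the guessing probability is this divided by the number
of states. -/
noncomputable def guessScore (M ρ : ι → Matrix n n 𝕜) : ℝ :=
  ∑ b, RCLike.re (M b * ρ b).trace

variable [DecidableEq n] {M ρ : ι → Matrix n n 𝕜} {K : Matrix n n 𝕜}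

theorem re_trace_sub_guessScore (hM : ∑ b, M b = 1) :
    RCLike.re K.trace - guessScore M ρ = ∑ b, RCLike.re (M b * (K - ρ b)).trace := by
  have hK : K.trace = ∑ b, (M b * K).trace := by
    rw [← trace_sum, ← Finset.sum_mul, hM, one_mul]
  simp only [guessScore, hK, mul_sub, trace_sub, map_sub, map_sum, Finset.sum_sub_distrib]

theorem IsPOVM.guessScore_le_re_trace (hM : IsPOVM M) (hK : ∀ b, (K - ρ b).PosSemidef) :
    guessScore M ρ ≤ RCLike.re K.trace := by
  rw [← sub_nonneg, re_trace_sub_guessScore hM.2]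
  exact Finset.sum_nonneg fun b _ =>
    (RCLike.nonneg_iff.mp (trace_mul_nonneg_of_posSemidef (hM.1 b) (hK b))).1

theorem guessScore_eq_re_trace (hM : ∑ b, M b = 1) (hK : ∀ b, M b * (K - ρ b) = 0) :
    guessScore M ρ = RCLike.re K.trace := by
  symm
  rw [← sub_eq_zero, re_trace_sub_guessScore hM]
  simp only [hK, trace_zero, map_zero, Finset.sum_const_zero]

end Discrimination

section Bloch

/-- `v ↦ v·σ` as a real-linear map on vectors, so that `pauliVec` can be used on linear
combinations. -/
noncomputable def pauliDot : (Fin 3 → ℝ) →ₗ[ℝ] Matrix (Fin 2) (Fin 2) ℂ where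
  toFun v := pauliVec (v 0) (v 1) (v 2)
  map_add' u v := by
    simp only [pauliVec, Pi.add_apply, Complex.ofReal_add]
    module
  map_smul' r v := by
    simp only [pauliVec, Pi.smul_apply, smul_eq_mul, Complex.ofReal_mul, RingHom.id_apply,
      ← Complex.coe_smul]
    module

theorem pauliDot_apply (v : Fin 3 → ℝ) :
    pauliDot v = !![(v 2 : ℂ), v 0 - v 1 * Complex.I; v 0 + v 1 * Complex.I, -v 2] := by
  change pauliVec (v 0) (v 1) (v 2) = _
  ext i j
  fin_cases i <;> fin_cases j <;> simp [pauliVec, pauliX, pauliY, pauliZ, sub_eq_add_neg]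

theorem isHermitian_pauliDot (v : Fin 3 → ℝ) : (pauliDot v).IsHermitian := by
  rw [pauliDot_apply]
  ext i j
  fin_cases i <;> fin_cases j <;> simp [sub_eq_add_neg]

theorem trace_pauliDot (v : Fin 3 → ℝ) : (pauliDot v).trace = 0 := by
  simp [pauliDot_apply, trace_fin_two]

theorem pauliDot_mul_self (v : Fin 3 → ℝ) : pauliDot v * pauliDot v = (v ⬝ᵥ v) • 1 := by
  have hprod : ((v 0 : ℂ) - v 1 * Complex.I) * (v 0 + v 1 * Complex.I) = v 0 * v 0 + v 1 * v 1 := by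
    linear_combination (-(v 1 : ℂ) ^ 2) * Complex.I_sq
  rw [pauliDot_apply, mul_fin_two, hprod, mul_comm ((v 0 : ℂ) + _) (v 0 - _), hprod]
  ext i j
  fin_cases i <;> fin_cases j <;> simp [dotProduct, Fin.sum_univ_three] <;> ring

theorem posSemidef_one_add_pauliDot {v : Fin 3 → ℝ} (hv : v ⬝ᵥ v ≤ 1) :
    (1 + pauliDot v).PosSemidef := by
  have hsq : 1 + pauliDot v = (1 / 2 : ℝ) •
      ((1 + pauliDot v)ᴴ * (1 + pauliDot v) + (1 - v ⬝ᵥ v) • 1) := by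
    rw [conjTranspose_add, conjTranspose_one, (isHermitian_pauliDot v).eq, add_mul, mul_add,
      mul_add, pauliDot_mul_self, one_mul, one_mul, mul_one]
    module
  rw [hsq]
  exact ((posSemidef_conjTranspose_mul_self _).add (PosSemidef.one.smul (sub_nonneg.mpr hv))).smul
    (by norm_num)

/-- The qubit density matrix `(I + v·σ) / 2` with Bloch vector `v`. -/
noncomputable def blochState (v : Fin 3 → ℝ) : Matrix (Fin 2) (Fin 2) ℂ :=
  (1 / 2 : ℝ) • (1 + pauliDot v)

/-- The dual certificate `((1 + r) I + c·σ) / 2`, which dominates every state whose Bloch vector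
lies in the ball with centre `c` and radius `r`. -/
noncomputable def ballCertificate (c : Fin 3 → ℝ) (r : ℝ) : Matrix (Fin 2) (Fin 2) ℂ :=
  (1 / 2 : ℝ) • ((1 + r) • 1 + pauliDot c)

theorem trace_ballCertificate (c : Fin 3 → ℝ) (r : ℝ) :
    (ballCertificate c r).trace = (1 + r : ℝ) := by
  simp only [ballCertificate, trace_smul, trace_add, trace_pauliDot, trace_one, Fintype.card_fin,
    Complex.real_smul]
  push_cast
  ring

theorem ballCertificate_sub_blochState (c u : Fin 3 → ℝ) (r : ℝ) :
    ballCertificate c r - blochState (c + r • u) = (r / 2) • (1 - pauliDot u) := by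
  rw [ballCertificate, blochState, map_add, map_smul]
  module

variable {ι : Type*} [Fintype ι] {u : ι → Fin 3 → ℝ} {r : ℝ}

theorem IsPOVM.guessScore_blochState_le {M : ι → Matrix (Fin 2) (Fin 2) ℂ} (hM : IsPOVM M)
    (hr : 0 ≤ r) (hu : ∀ b, u b ⬝ᵥ u b ≤ 1) (c : Fin 3 → ℝ) :
    guessScore M (fun b => blochState (c + r • u b)) ≤ 1 + r := by
  have hK (b : ι) : (ballCertificate c r - blochState (c + r • u b)).PosSemidef := by
    rw [ballCertificate_sub_blochState, sub_eq_add_neg, ← map_neg]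
    refine (posSemidef_one_add_pauliDot ?_).smul (div_nonneg hr zero_le_two)
    simpa only [neg_dotProduct_neg] using hu b
  simpa only [trace_ballCertificate, RCLike.re_eq_complex_re, Complex.ofReal_re] using
    hM.guessScore_le_re_trace hK

/-- The measurement with effects `w b (I + u b·σ)`: for unit `u b`, outcome `b` is a weighted
projection onto spin direction `u b`. -/
noncomputable def spinMeasurement (w : ι → ℝ) (u : ι → Fin 3 → ℝ) (b : ι) :
    Matrix (Fin 2) (Fin 2) ℂ :=
  w b • (1 + pauliDot (u b))

variable {w : ι → ℝ}

theorem sum_spinMeasurement (hw : ∑ b, w b = 1) (hwu : ∑ b, w b • u b = 0) :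
    ∑ b, spinMeasurement w u b = 1 := by
  simp only [spinMeasurement, smul_add, Finset.sum_add_distrib, ← Finset.sum_smul, hw,
    ← map_smul, ← map_sum, hwu, map_zero, one_smul, add_zero]

theorem isPOVM_spinMeasurement (hw₀ : ∀ b, 0 ≤ w b) (hw : ∑ b, w b = 1)
    (hwu : ∑ b, w b • u b = 0) (hu : ∀ b, u b ⬝ᵥ u b ≤ 1) : IsPOVM (spinMeasurement w u) :=
  ⟨fun b => (posSemidef_one_add_pauliDot (hu b)).smul (hw₀ b), sum_spinMeasurement hw hwu⟩

theorem guessScore_spinMeasurement (hw : ∑ b, w b = 1) (hwu : ∑ b, w b • u b = 0)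
    (hu : ∀ b, u b ⬝ᵥ u b = 1) (c : Fin 3 → ℝ) (r : ℝ) :
    guessScore (spinMeasurement w u) (fun b => blochState (c + r • u b)) = 1 + r := by
  have horth (b : ι) : (1 + pauliDot (u b)) * (1 - pauliDot (u b)) = 0 := by
    rw [add_mul, mul_sub, mul_sub, pauliDot_mul_self, hu, one_smul, one_mul, one_mul, mul_one]
    abel
  have hK (b : ι) :
      spinMeasurement w u b * (ballCertificate c r - blochState (c + r • u b)) = 0 := by
    rw [ballCertificate_sub_blochState, spinMeasurement, smul_mul_smul_comm, horth, smul_zero]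
  rw [guessScore_eq_re_trace (sum_spinMeasurement hw hwu) hK, trace_ballCertificate,
    RCLike.re_eq_complex_re, Complex.ofReal_re]

end Bloch

section SixState

/-- The unit vector from the centroid `(1, 1, 1) / 3` of the Bloch vectors of `omega6` towards the
`b`-th of them; this is `-n_b` in the notation of `Mpovm6`. -/
noncomputable def centroidDirection (b : Fin 3) : Fin 3 → ℝ :=
  (√6)⁻¹ • ((3 : ℝ) • Pi.single b 1 - 1)

theorem centroidDirection_dotProduct_self (b : Fin 3) :
    centroidDirection b ⬝ᵥ centroidDirection b = 1 := by
  have hsqrt : (√6)⁻¹ * (√6)⁻¹ = (6 : ℝ)⁻¹ := by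
    rw [← mul_inv, Real.mul_self_sqrt (by norm_num)]
  rw [centroidDirection, smul_dotProduct, dotProduct_smul, smul_smul, hsqrt]
  simp only [sub_dotProduct, dotProduct_sub, smul_dotProduct, dotProduct_smul,
    single_one_dotProduct, dotProduct_single_one, one_dotProduct_one, Pi.one_apply, smul_eq_mul,
    Fintype.card_fin]
  norm_num

theorem sum_centroidDirection : ∑ b, centroidDirection b = 0 := by
  have hbasis : ∑ b : Fin 3, (Pi.single b 1 : Fin 3 → ℝ) = 1 := Finset.univ_sum_single 1
  simp only [centroidDirection, ← Finset.smul_sum, Finset.sum_sub_distrib, hbasis]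
  ext i
  norm_num

theorem sum_third_smul_centroidDirection : ∑ b, (1 / 3 : ℝ) • centroidDirection b = 0 := by
  rw [← Finset.smul_sum, sum_centroidDirection, smul_zero]

theorem centroid_add_smul_centroidDirection (b : Fin 3) :
    (1 / 3 : ℝ) • 1 + (√6 / 3) • centroidDirection b = Pi.single b 1 := by
  have hsqrt : √6 / 3 * (√6)⁻¹ = 1 / 3 := by field_simp
  rw [centroidDirection, smul_smul, hsqrt]
  module

theorem omega6_eq_blochState :
    omega6 = fun b => blochState ((1 / 3 : ℝ) • 1 + (√6 / 3) • centroidDirection b) := by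
  funext b
  rw [centroid_add_smul_centroidDirection, blochState, pauliDot_apply]
  ext i j
  fin_cases b <;> fin_cases i <;> fin_cases j <;> simp [omega6, pauliX, pauliY, pauliZ]

theorem Mpovm6_eq_spinMeasurement :
    Mpovm6 = spinMeasurement (fun _ => 1 / 3) centroidDirection := by
  funext b
  rw [spinMeasurement, pauliDot_apply]
  ext i j
  fin_cases b <;> fin_cases i <;> fin_cases j <;>
    simp [Mpovm6, pauliVec, pauliX, pauliY, pauliZ, centroidDirection] <;> ring

theorem isPOVM_Mpovm6 : IsPOVM Mpovm6 :=
  Mpovm6_eq_spinMeasurement ▸ isPOVM_spinMeasurement (fun _ => by norm_num) (by norm_num)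
    sum_third_smul_centroidDirection fun b => (centroidDirection_dotProduct_self b).le

theorem guessScore_Mpovm6 : guessScore Mpovm6 omega6 = 1 + √6 / 3 := by
  rw [Mpovm6_eq_spinMeasurement, omega6_eq_blochState]
  exact guessScore_spinMeasurement (by norm_num) sum_third_smul_centroidDirection
    centroidDirection_dotProduct_self _ _

theorem IsPOVM.guessScore_omega6_le {M : Fin 3 → Matrix (Fin 2) (Fin 2) ℂ} (hM : IsPOVM M) :
    guessScore M omega6 ≤ 1 + √6 / 3 := by
  rw [omega6_eq_blochState]
  exact hM.guessScore_blochState_le (by positivity)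
    (fun b => (centroidDirection_dotProduct_self b).le) _

end SixState

/-- **Attack K1 on 6-state encoding, min-entropy.** The optimal probability of
guessing which of the three equiprobable states `ω_b` is present equals
`1/3 + 2/(3√6)`, attained by the POVM `M_b = (I - n_b·σ)/3`. -/
theorem stmt16 :
    (sSup {g : ℝ | ∃ M : Fin 3 → Matrix (Fin 2) (Fin 2) ℂ,
        (∀ b, (M b).PosSemidef) ∧ (∑ b, M b) = 1 ∧
        g = (1/3) * ∑ b, (M b * omega6 b).trace.re} =
      1/3 + 2/(3 * Real.sqrt 6)) ∧
    ((∀ b, (Mpovm6 b).PosSemidef) ∧ (∑ b, Mpovm6 b) = 1) ∧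
    (1/3) * (∑ b, (Mpovm6 b * omega6 b).trace.re) = 1/3 + 2/(3 * Real.sqrt 6) := by
  have hvalue : 1 / 3 + 2 / (3 * √6) = 1 / 3 * (1 + √6 / 3) := by
    field_simp
    linear_combination (-1 : ℝ) * Real.sq_sqrt (show (0 : ℝ) ≤ 6 by norm_num)
  have hattained : 1 / 3 * guessScore Mpovm6 omega6 = 1 / 3 + 2 / (3 * √6) := by
    rw [guessScore_Mpovm6, hvalue]
  refine ⟨IsGreatest.csSup_eq ⟨⟨Mpovm6, isPOVM_Mpovm6.1, isPOVM_Mpovm6.2, hattained.symm⟩, ?_⟩,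
    isPOVM_Mpovm6, hattained⟩
  rintro _ ⟨M, hpos, hsum, rfl⟩
  rw [hvalue]
  exact mul_le_mul_of_nonneg_left (IsPOVM.guessScore_omega6_le ⟨hpos, hsum⟩) (by norm_num)
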